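/- For each l ∈ ℕ and each D > 1, there exists 0 < a < 1 such that: if (Z, d_Z) is any metric space and h : 2^l → Z is a map with (1−a)·Lip(h) < min_{δ∈2^l} d_Z(h(δ), h(−δ)), then h is injective and dist(h) = Lip(h)·Lip(h⁻¹) ≤ D. -/

import Mathlib

/-!
Write `L = Lip h`. For `ε ≠ δ`, the path `ε → δ → -ε` is a geodesic of the cube:
`∂(δ, -ε) = 1 - ∂(ε, δ)`. The triangle inequality and the almost extremal distance between
`h ε` and `h (-ε)` therefore give

`d(h ε, h δ) ≥ d(h ε, h (-ε)) - d(h δ, h (-ε)) > (1 - a) L - L (1 - ∂(ε, δ)) = L (∂(ε, δ) - a)`.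

Distinct points of the cube satisfy `∂(ε, δ) ≥ 1 / l`, so with `a = (1 - 1 / D) / l` the right-hand
side is at least `L ∂(ε, δ) / D`. This strict lower bound yields injectivity and, on dividing,
distortion at most `D`.
-/

open Finset

noncomputable section

/-- Normalized Hamming distance on the cube `{±1}^n` (modeled as `Fin n → Bool`). -/
def hdist (n : ℕ) (ε δ : Fin n → Bool) : ℝ :=
  ((Finset.univ.filter fun i => ε i ≠ δ i).card : ℝ) / n

/-- `-ε`: flip all coordinates. -/
def negCube {n : ℕ} (ε : Fin n → Bool) : Fin n → Bool := fun i => !(ε i)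

/-- `d_i ε`: flip the `i`-th coordinate. -/
def flipCoord {n : ℕ} (i : Fin n) (ε : Fin n → Bool) : Fin n → Bool :=
  Function.update ε i (!(ε i))

/-- Expectation with respect to the uniform probability measure on the cube. -/
def cubeE (n : ℕ) (Φ : (Fin n → Bool) → ℝ) : ℝ :=
  (∑ ε : Fin n → Bool, Φ ε) / 2 ^ n

/-- Lipschitz constant of a map from the cube (with metric `hdist`) into a metric space,
with the convention `0 / 0 = 0`. -/
def cubeLip {n : ℕ} {X : Type} [MetricSpace X] (f : (Fin n → Bool) → X) : ℝ :=
  sSup { r : ℝ | ∃ ε δ, r = dist (f ε) (f δ) / hdist n ε δ }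

/-- A map between (bundled) metric spaces. -/
structure MetricMap where
  X : Type
  Y : Type
  mX : MetricSpace X
  mY : MetricSpace Y
  F : X → Y

attribute [instance] MetricMap.mX MetricMap.mY

/-- Lipschitz constant of the "inverse" of a map from the cube: `sup ∂(ε,δ)/d(f(ε),f(δ))`,
with the convention `0 / 0 = 0`.  For an injective `f` this is `Lip(f⁻¹)`. -/
def cubeCoLip {n : ℕ} {X : Type} [MetricSpace X] (f : (Fin n → Bool) → X) : ℝ :=
  sSup { r : ℝ | ∃ ε δ, r = hdist n ε δ / dist (f ε) (f δ) }

/-- The distortion `dist(f) = Lip(f)·Lip(f⁻¹)` of an (injective) map from the cube. -/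
def cubeDistortion {n : ℕ} {X : Type} [MetricSpace X] (f : (Fin n → Bool) → X) : ℝ :=
  cubeLip f * cubeCoLip f

lemma hdist_nonneg (n : ℕ) (ε δ : Fin n → Bool) : 0 ≤ hdist n ε δ := by
  unfold hdist; positivity

lemma hdist_self (n : ℕ) (ε : Fin n → Bool) : hdist n ε ε = 0 := by
  simp [hdist]

lemma one_div_le_hdist {n : ℕ} {ε δ : Fin n → Bool} (hne : ε ≠ δ) :
    1 / (n : ℝ) ≤ hdist n ε δ := by
  obtain ⟨i, hi⟩ := Function.ne_iff.mp hne
  have hcard : 0 < (Finset.univ.filter fun i => ε i ≠ δ i).card :=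
    Finset.card_pos.mpr ⟨i, by simpa using hi⟩
  unfold hdist
  gcongr
  exact_mod_cast hcard

/-- Every point of the cube lies on a geodesic between a given point and its antipode. -/
lemma hdist_add_hdist_negCube {n : ℕ} (hn : 0 < n) (ε δ : Fin n → Bool) :
    hdist n ε δ + hdist n δ (negCube ε) = 1 := by
  have hfilter : (Finset.univ.filter fun i => δ i ≠ negCube ε i)
      = Finset.univ.filter fun i => ¬ (ε i ≠ δ i) := by
    ext i
    cases h1 : ε i <;> cases h2 : δ i <;> simp [negCube, h1, h2]
  have hcard := Finset.card_filter_add_card_filter_not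
    (s := (Finset.univ : Finset (Fin n))) (fun i => ε i ≠ δ i)
  rw [Finset.card_univ, Fintype.card_fin] at hcard
  have hn' : (n : ℝ) ≠ 0 := by positivity
  unfold hdist
  rw [hfilter, ← add_div, div_eq_one_iff_eq hn']
  exact_mod_cast hcard

section
variable {n : ℕ} {X : Type} [MetricSpace X]

lemma div_le_cubeLip (f : (Fin n → Bool) → X) (ε δ : Fin n → Bool) :
    dist (f ε) (f δ) / hdist n ε δ ≤ cubeLip f := by
  refine le_csSup (Set.Finite.bddAbove ?_) ⟨ε, δ, rfl⟩
  refine (Set.finite_range fun p : (Fin n → Bool) × (Fin n → Bool) =>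
    dist (f p.1) (f p.2) / hdist n p.1 p.2).subset ?_
  rintro r ⟨ε, δ, rfl⟩
  exact ⟨(ε, δ), rfl⟩

lemma cubeLip_nonneg (f : (Fin n → Bool) → X) : 0 ≤ cubeLip f := by
  simpa using div_le_cubeLip f (fun _ => true) (fun _ => true)

lemma dist_le_cubeLip_mul (hn : 0 < n) (f : (Fin n → Bool) → X) (ε δ : Fin n → Bool) :
    dist (f ε) (f δ) ≤ cubeLip f * hdist n ε δ := by
  by_cases hne : ε = δ
  · simp [hne, hdist_self]
  · have hpos : 0 < hdist n ε δ := lt_of_lt_of_le (by positivity) (one_div_le_hdist hne)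
    exact (div_le_iff₀ hpos).mp (div_le_cubeLip f ε δ)

/-- A strict co-Lipschitz bound with constant `Lip f / D` off the diagonal makes `f` an embedding
of distortion at most `D`. -/
lemma injective_and_distortion_le {D : ℝ} (hD : 0 < D) (f : (Fin n → Bool) → X)
    (hf : ∀ ε δ, ε ≠ δ → cubeLip f * hdist n ε δ / D < dist (f ε) (f δ)) :
    Function.Injective f ∧ cubeDistortion f ≤ D := by
  have hL := cubeLip_nonneg f
  have hpos : ∀ ε δ, ε ≠ δ → 0 < dist (f ε) (f δ) := fun ε δ hne =>
    lt_of_le_of_lt (div_nonneg (mul_nonneg hL (hdist_nonneg n ε δ)) hD.le) (hf ε δ hne)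
  refine ⟨fun ε δ he => ?_, ?_⟩
  · by_contra hne
    exact dist_ne_zero.mp (hpos ε δ hne).ne' he
  · unfold cubeDistortion
    rcases hL.eq_or_lt with h0 | hLpos
    · rw [← h0, zero_mul]; exact hD.le
    · rw [mul_comm, ← le_div_iff₀ hLpos]
      refine csSup_le ⟨_, fun _ => true, fun _ => true, rfl⟩ ?_
      rintro r ⟨ε, δ, rfl⟩
      by_cases hne : ε = δ
      · simp only [hne, hdist_self, zero_div]; positivity
      · rw [div_le_div_iff₀ (hpos ε δ hne) hLpos]
        have := (div_lt_iff₀ hD).mp (hf ε δ hne)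
        linarith

end

/-- Proposition 5.4: a map on the cube whose antipodal distances nearly attain its Lipschitz
constant is an embedding of distortion at most `D`. -/
theorem sharp_embedding (l : ℕ) (hl : 0 < l) (D : ℝ) (hD : 1 < D) :
    ∃ a : ℝ, 0 < a ∧ a < 1 ∧
      ∀ (Z : Type) [MetricSpace Z] (h : (Fin l → Bool) → Z),
        (∀ δ : Fin l → Bool, (1 - a) * cubeLip h < dist (h δ) (h (negCube δ))) →
        Function.Injective h ∧ cubeDistortion h ≤ D := by
  have hl' : (0 : ℝ) < l := by exact_mod_cast hl
  have hl1 : (1 : ℝ) ≤ l := by exact_mod_cast hl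
  have hD0 : 0 < D := by linarith
  have hDinv : 1 / D < 1 := (div_lt_one hD0).mpr hD
  have hDpos : 0 < 1 / D := by positivity
  refine ⟨(1 - 1 / D) / l, div_pos (by linarith) hl', ?_, ?_⟩
  · rw [div_lt_one hl']; linarith
  intro Z _ h hanti
  refine injective_and_distortion_le hD0 h fun ε δ hne => ?_
  have hL := cubeLip_nonneg h
  have htri := dist_triangle (h ε) (h δ) (h (negCube ε))
  have hlip := dist_le_cubeLip_mul hl h δ (negCube ε)
  have hsum := hdist_add_hdist_negCube hl ε δ
  -- `a = (1 - 1 / D) · (1 / l) ≤ (1 - 1 / D) · ∂(ε, δ)`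
  have ha : (1 - 1 / D) / l ≤ (1 - 1 / D) * hdist l ε δ := by
    rw [div_eq_mul_one_div]
    exact mul_le_mul_of_nonneg_left (one_div_le_hdist hne) (by linarith)
  have hLa := mul_le_mul_of_nonneg_left ha hL
  have hge := hanti ε
  rw [show hdist l δ (negCube ε) = 1 - hdist l ε δ by linarith] at hlip
  rw [show cubeLip h * hdist l ε δ / D = cubeLip h * (1 / D * hdist l ε δ) by ring]
  linarith
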